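/- arXiv:1909.07232 — 2 statements merged into one kernel-verified Lean document; each statement's English description precedes it below -/
import Mathlib

section
/- Let d ≥ 2 and let X be a random vector in ℝ^d distributed according to the multivariate Gaussian law with mean vector m and positive definite covariance matrix Σ = (σ_{jk}). Then for every 1 ≤ j ≤ d, E[(X_j − m_j)·X_j/|X|] = E[ σ_{jj}/|X| − (∑_{k=1}^{d} σ_{jk}·X_j·X_k)/|X|³ ], where |x| denotes the Euclidean norm on ℝ^d. -/
open Real MeasureTheory

/-- The multivariate Gaussian measure on `ℝ^d` (with the Euclidean structure), with mean
vector `m` and (positive definite) covariance matrix `S`, defined via its density with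
respect to the Lebesgue measure. -/
noncomputable def multiGaussian (d : ℕ) (m : EuclideanSpace ℝ (Fin d))
    (S : Matrix (Fin d) (Fin d) ℝ) : Measure (EuclideanSpace ℝ (Fin d)) :=
  volume.withDensity fun x => ENNReal.ofReal
    ((2 * Real.pi) ^ (-(d : ℝ) / 2) * S.det ^ (-(1 : ℝ) / 2) *
      Real.exp (-(∑ i, ∑ k, (x i - m i) * S⁻¹ i k * (x k - m k)) / 2))

/-! With `T = Σ⁻¹`, the Gaussian density `p` satisfies `∂_v p = -⟪T v, x - m⟫ p`, so integrating by
parts along `v = Σ w` against `f x = ⟪u, x⟫ / ‖x‖` gives the identity. Since `d ≥ 2`, the line `ℝ v`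
through the origin is null, and every other line parallel to `v` avoids the only singularity of `f`:
no regularisation is needed, only the integrability of `‖x‖⁻¹ p`, which dominates `∂_v f * p`. -/

open Module Set
open scoped RealInnerProductSpace

lemma span_singleton_ne_top_of_two_le_finrank {K V : Type*} [DivisionRing K] [AddCommGroup V]
    [Module K V] (hV : 2 ≤ finrank K V) (v : V) : K ∙ v ≠ ⊤ := by
  intro h
  have := finrank_le_one v fun w ↦
    Submodule.mem_span_singleton.1 (h ▸ Submodule.mem_top : w ∈ K ∙ v)
  omega

section IntegrationByParts

variable {E F G W : Type*} [NormedAddCommGroup E] [NormedSpace ℝ E]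
  [NormedAddCommGroup F] [NormedSpace ℝ F] [NormedAddCommGroup G] [NormedSpace ℝ G]
  [NormedAddCommGroup W] [NormedSpace ℝ W]

lemma hasLineDerivAt_indicator_compl_submodule {P : Submodule ℝ E} {v : E} (hv : v ∈ P)
    {f f' : E → F} (hf : ∀ x ∉ P, HasLineDerivAt ℝ f (f' x) x v) (x : E) :
    HasLineDerivAt ℝ ((P : Set E)ᶜ.indicator f) ((P : Set E)ᶜ.indicator f' x) x v := by
  have mem_line (t : ℝ) : x + t • v ∈ P ↔ x ∈ P := P.add_mem_iff_left (P.smul_mem t hv)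
  by_cases hx : x ∈ P
  · simpa [HasLineDerivAt, indicator, mem_line, hx] using hasDerivAt_const (0 : ℝ) (0 : F)
  · simpa [HasLineDerivAt, indicator, mem_line, hx] using hf x hx

variable [MeasurableSpace E] [BorelSpace E] [FiniteDimensional ℝ E]
  {μ : Measure E} [μ.IsAddHaarMeasure]

-- `P` is a null set invariant under translation by `v`, so killing `f` and `g` on `P` changes no
-- integral and makes them differentiable along every line parallel to `v`.
theorem integral_bilinear_hasLineDerivAt_right_eq_neg_left_of_notMem_submodule
    {P : Submodule ℝ E} (hP : P ≠ ⊤) {v : E} (hv : v ∈ P)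
    {f f' : E → F} {g g' : E → G} {B : F →L[ℝ] G →L[ℝ] W}
    (hf'g : Integrable (fun x ↦ B (f' x) (g x)) μ)
    (hfg' : Integrable (fun x ↦ B (f x) (g' x)) μ)
    (hfg : Integrable (fun x ↦ B (f x) (g x)) μ)
    (hf : ∀ x ∉ P, HasLineDerivAt ℝ f (f' x) x v)
    (hg : ∀ x ∉ P, HasLineDerivAt ℝ g (g' x) x v) :
    ∫ x, B (f x) (g' x) ∂μ = -∫ x, B (f' x) (g x) ∂μ := by
  have ae_notMem : ∀ᵐ x ∂μ, x ∉ P := measure_eq_zero_iff_ae_notMem.1 (μ.addHaar_submodule P hP)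
  have indicator_ae_eq (a : E → F) (b : E → G) :
      (fun x ↦ B (a x) (b x)) =ᵐ[μ]
        fun x ↦ B ((P : Set E)ᶜ.indicator a x) ((P : Set E)ᶜ.indicator b x) := by
    filter_upwards [ae_notMem] with x hx
    simp [hx]
  rw [integral_congr_ae (indicator_ae_eq f g'), integral_congr_ae (indicator_ae_eq f' g)]
  exact integral_bilinear_hasLineDerivAt_right_eq_neg_left_of_integrable
    (hf'g.congr (indicator_ae_eq f' g)) (hfg'.congr (indicator_ae_eq f g'))
    (hfg.congr (indicator_ae_eq f g))
    (fun x _ ↦ hasLineDerivAt_indicator_compl_submodule hv hf x)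
    (fun x _ ↦ hasLineDerivAt_indicator_compl_submodule hv hg x)

end IntegrationByParts

lemma integrable_norm_rpow_mul_exp_neg_mul_norm_sq {E : Type*} [NormedAddCommGroup E]
    [NormedSpace ℝ E] [FiniteDimensional ℝ E] [Nontrivial E] [MeasurableSpace E] [BorelSpace E]
    {μ : Measure E} [μ.IsAddHaarMeasure] {b s : ℝ} (hb : 0 < b) (hs : -(finrank ℝ E : ℝ) < s) :
    Integrable (fun x : E ↦ ‖x‖ ^ s * exp (-b * ‖x‖ ^ 2)) μ := by
  refine (integrable_fun_norm_addHaar μ (f := fun r ↦ r ^ s * exp (-b * r ^ 2))).2 ?_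
  refine (integrableOn_rpow_mul_exp_neg_mul_sq hb
    (s := (finrank ℝ E - 1 : ℕ) + s) ?_).congr_fun (fun r hr ↦ ?_) measurableSet_Ioi
  · rw [Nat.cast_pred finrank_pos]
    linarith
  · simp only [smul_eq_mul, rpow_add (mem_Ioi.1 hr), rpow_natCast, mul_assoc]

section GaussianWeight

variable {E : Type*} [NormedAddCommGroup E] [InnerProductSpace ℝ E]

/-- The unnormalised Gaussian density with mean `m` and precision operator (inverse covariance)
`T`. -/
noncomputable def gaussianWeight (T : E →L[ℝ] E) (m x : E) : ℝ :=
  exp (-⟪x - m, T (x - m)⟫ / 2)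

lemma gaussianWeight_nonneg (T : E →L[ℝ] E) (m x : E) : 0 ≤ gaussianWeight T m x := exp_nonneg _

@[fun_prop]
lemma continuous_gaussianWeight (T : E →L[ℝ] E) (m : E) : Continuous (gaussianWeight T m) := by
  unfold gaussianWeight
  fun_prop

lemma hasLineDerivAt_gaussianWeight {T : E →L[ℝ] E} (hT : (T : E →ₗ[ℝ] E).IsSymmetric)
    (m x v : E) :
    HasLineDerivAt ℝ (gaussianWeight T m) (-(⟪T v, x - m⟫ * gaussianWeight T m x)) x v := by
  have line : HasDerivAt (fun t : ℝ ↦ x + t • v - m) v 0 := by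
    simpa using (((hasDerivAt_id (0 : ℝ)).smul_const v).const_add x).sub_const m
  have symm : ⟪T v, x - m⟫ = ⟪v, T (x - m)⟫ := hT v (x - m)
  have quadratic : HasDerivAt (fun t : ℝ ↦ ⟪x + t • v - m, T (x + t • v - m)⟫)
      (2 * ⟪T v, x - m⟫) 0 := by
    refine (line.inner ℝ (T.hasFDerivAt.comp_hasDerivAt 0 line)).congr_deriv ?_
    simp only [zero_smul, add_zero, Function.comp_apply]
    rw [← symm, real_inner_comm, two_mul]
  refine (quadratic.fun_neg.div_const 2).exp.congr_deriv ?_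
  simp only [zero_smul, add_zero, gaussianWeight]
  ring

lemma gaussianWeight_le {T : E →L[ℝ] E} {l : ℝ} (hl : 0 ≤ l)
    (hT : ∀ y, l * ‖y‖ ^ 2 ≤ ⟪y, T y⟫) (m x : E) :
    gaussianWeight T m x ≤ exp (l / 2 * ‖m‖ ^ 2) * exp (-(l / 4) * ‖x‖ ^ 2) := by
  have norm_sq_le : ‖x‖ ^ 2 ≤ 2 * (‖x - m‖ ^ 2 + ‖m‖ ^ 2) := by
    calc ‖x‖ ^ 2 ≤ (‖x - m‖ + ‖m‖) ^ 2 := by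
          gcongr
          simpa using norm_add_le (x - m) m
      _ ≤ 2 * (‖x - m‖ ^ 2 + ‖m‖ ^ 2) := add_sq_le
  rw [gaussianWeight, ← exp_add]
  gcongr
  linarith [hT (x - m), mul_le_mul_of_nonneg_left norm_sq_le hl]

variable [MeasurableSpace E] [BorelSpace E] [FiniteDimensional ℝ E]
  {μ : Measure E} [μ.IsAddHaarMeasure] {T : E →L[ℝ] E} {l : ℝ}

lemma integrable_mul_gaussianWeight_of_norm_le_rpow [Nontrivial E] (hl : 0 < l)
    (hT : ∀ y, l * ‖y‖ ^ 2 ≤ ⟪y, T y⟫) (m : E) {g : E → ℝ} (hg : AEStronglyMeasurable g μ)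
    {K s : ℝ} (hs : -(finrank ℝ E : ℝ) < s) (hgK : ∀ x, ‖g x‖ ≤ K * ‖x‖ ^ s) :
    Integrable (fun x ↦ g x * gaussianWeight T m x) μ := by
  refine ((integrable_norm_rpow_mul_exp_neg_mul_norm_sq (b := l / 4) (by positivity) hs).const_mul
    (K * exp (l / 2 * ‖m‖ ^ 2))).mono' (by fun_prop) (.of_forall fun x ↦ ?_)
  calc ‖g x * gaussianWeight T m x‖
      = ‖g x‖ * gaussianWeight T m x := by
        rw [norm_mul, norm_of_nonneg (gaussianWeight_nonneg T m x)]
    _ ≤ (K * ‖x‖ ^ s) * (exp (l / 2 * ‖m‖ ^ 2) * exp (-(l / 4) * ‖x‖ ^ 2)) :=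
        mul_le_mul (hgK x) (gaussianWeight_le hl.le hT m x)
          (gaussianWeight_nonneg T m x) ((norm_nonneg _).trans (hgK x))
    _ = K * exp (l / 2 * ‖m‖ ^ 2) * (‖x‖ ^ s * exp (-(l / 4) * ‖x‖ ^ 2)) := by ring

theorem integral_inner_mul_mul_gaussianWeight (hT : (T : E →ₗ[ℝ] E).IsSymmetric) (m : E)
    {P : Submodule ℝ E} (hP : P ≠ ⊤) {v : E} (hv : v ∈ P) {f f' : E → ℝ}
    (hf : ∀ x ∉ P, HasLineDerivAt ℝ f (f' x) x v)
    (hf_int : Integrable (fun x ↦ f x * gaussianWeight T m x) μ)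
    (hf_inner_int : Integrable (fun x ↦ ⟪T v, x - m⟫ * f x * gaussianWeight T m x) μ)
    (hf'_int : Integrable (fun x ↦ f' x * gaussianWeight T m x) μ) :
    ∫ x, ⟪T v, x - m⟫ * f x * gaussianWeight T m x ∂μ = ∫ x, f' x * gaussianWeight T m x ∂μ := by
  have by_parts := integral_bilinear_hasLineDerivAt_right_eq_neg_left_of_notMem_submodule
    (B := ContinuousLinearMap.mul ℝ ℝ) (μ := μ) hP hv (f := f) (f' := f') (g := gaussianWeight T m)
    hf'_int (by simpa [mul_assoc, mul_left_comm] using hf_inner_int.neg) hf_int hf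
    (fun x _ ↦ hasLineDerivAt_gaussianWeight hT m x v)
  simpa [integral_neg, mul_assoc, mul_left_comm] using by_parts

end GaussianWeight

section NormalizedInner

variable {E : Type*} [NormedAddCommGroup E] [InnerProductSpace ℝ E]

lemma hasLineDerivAt_norm {x : E} (hx : x ≠ 0) (v : E) :
    HasLineDerivAt ℝ (fun y ↦ ‖y‖) (⟪x, v⟫ / ‖x‖) x v := by
  have line : HasDerivAt (fun t : ℝ ↦ x + t • v) v 0 := by
    simpa using ((hasDerivAt_id (0 : ℝ)).smul_const v).const_add x
  have sqrt_norm_sq := line.norm_sq.sqrt (by simpa using hx)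
  simpa [HasLineDerivAt, mul_div_mul_left] using sqrt_norm_sq

lemma hasLineDerivAt_inner_div_norm (u v : E) {x : E} (hx : x ≠ 0) :
    HasLineDerivAt ℝ (fun y ↦ ⟪u, y⟫ / ‖y‖)
      (⟪u, v⟫ / ‖x‖ - ⟪u, x⟫ * ⟪x, v⟫ / ‖x‖ ^ 3) x v := by
  have numerator : HasLineDerivAt ℝ (fun y ↦ ⟪u, y⟫) ⟪u, v⟫ x v :=
    (innerSL ℝ u).hasFDerivAt.hasLineDerivAt v
  have norm_ne : ‖x‖ ≠ 0 := norm_ne_zero_iff.2 hx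
  refine (HasDerivAt.div numerator (hasLineDerivAt_norm hx v) (by simpa)).congr_deriv ?_
  simp only [zero_smul, add_zero]
  field_simp

lemma norm_inner_div_norm_le (u x : E) : ‖⟪u, x⟫ / ‖x‖‖ ≤ ‖u‖ := by
  rw [norm_div, norm_norm]
  exact div_le_of_le_mul₀ (norm_nonneg x) (norm_nonneg u) (norm_inner_le_norm u x)

lemma norm_lineDeriv_inner_div_norm_le (u v x : E) :
    ‖⟪u, v⟫ / ‖x‖ - ⟪u, x⟫ * ⟪x, v⟫ / ‖x‖ ^ 3‖ ≤ 2 * ‖u‖ * ‖v‖ * ‖x‖⁻¹ := by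
  have first : ‖⟪u, v⟫ / ‖x‖‖ ≤ ‖u‖ * ‖v‖ * ‖x‖⁻¹ := by
    rw [norm_div, norm_norm, div_eq_mul_inv]
    gcongr
    exact norm_inner_le_norm u v
  have second : ‖⟪u, x⟫ * ⟪x, v⟫ / ‖x‖ ^ 3‖ ≤ ‖u‖ * ‖v‖ * ‖x‖⁻¹ := by
    calc ‖⟪u, x⟫ * ⟪x, v⟫ / ‖x‖ ^ 3‖
        = ‖⟪u, x⟫ / ‖x‖‖ * ‖⟪v, x⟫ / ‖x‖‖ * ‖x‖⁻¹ := by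
          simp only [norm_div, norm_mul, norm_pow, norm_norm, real_inner_comm x v]
          field_simp
      _ ≤ ‖u‖ * ‖v‖ * ‖x‖⁻¹ := by
          gcongr <;> exact norm_inner_div_norm_le _ _
  linarith [norm_sub_le (⟪u, v⟫ / ‖x‖) (⟪u, x⟫ * ⟪x, v⟫ / ‖x‖ ^ 3)]

variable [MeasurableSpace E] [BorelSpace E] [FiniteDimensional ℝ E]
  {μ : Measure E} [μ.IsAddHaarMeasure] {T : E →L[ℝ] E} {l : ℝ}

theorem integral_inner_mul_inner_div_norm_mul_gaussianWeight (hE : 2 ≤ finrank ℝ E)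
    (hT : (T : E →ₗ[ℝ] E).IsSymmetric) (hl : 0 < l) (hTl : ∀ y, l * ‖y‖ ^ 2 ≤ ⟪y, T y⟫)
    (m u v : E) :
    ∫ x, ⟪T v, x - m⟫ * (⟪u, x⟫ / ‖x‖) * gaussianWeight T m x ∂μ
      = ∫ x, (⟪u, v⟫ / ‖x‖ - ⟪u, x⟫ * ⟪x, v⟫ / ‖x‖ ^ 3) * gaussianWeight T m x ∂μ := by
  have : Nontrivial E := nontrivial_of_finrank_pos (R := ℝ) (by omega)
  have two_le : (2 : ℝ) ≤ finrank ℝ E := mod_cast hE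
  have integrable_of_le {g : E → ℝ} (hg : Measurable g) {K : ℝ} (s : ℝ) (hs : -2 < s)
      (hgK : ∀ x, ‖g x‖ ≤ K * ‖x‖ ^ s) : Integrable (fun x ↦ g x * gaussianWeight T m x) μ :=
    integrable_mul_gaussianWeight_of_norm_le_rpow hl hTl m hg.aestronglyMeasurable
      (by linarith) hgK
  have int_f : Integrable (fun x ↦ ⟪u, x⟫ / ‖x‖ * gaussianWeight T m x) μ :=
    integrable_of_le (by fun_prop) 0 (by norm_num) (K := ‖u‖) fun x ↦ by
      simpa using norm_inner_div_norm_le u x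
  have int_f_inner :
      Integrable (fun x ↦ ⟪T v, x⟫ * (⟪u, x⟫ / ‖x‖) * gaussianWeight T m x) μ :=
    integrable_of_le (by fun_prop) 1 (by norm_num) (K := ‖u‖ * ‖T v‖) fun x ↦ by
      calc ‖⟪T v, x⟫ * (⟪u, x⟫ / ‖x‖)‖
          ≤ ‖T v‖ * ‖x‖ * ‖u‖ := by
            rw [norm_mul]
            gcongr
            exacts [norm_inner_le_norm _ _, norm_inner_div_norm_le u x]
        _ = ‖u‖ * ‖T v‖ * ‖x‖ ^ (1 : ℝ) := by rw [rpow_one]; ring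
  have int_f' : Integrable
      (fun x ↦ (⟪u, v⟫ / ‖x‖ - ⟪u, x⟫ * ⟪x, v⟫ / ‖x‖ ^ 3) * gaussianWeight T m x) μ :=
    integrable_of_le (by fun_prop) (-1) (by norm_num) fun x ↦ by
      simpa [rpow_neg_one] using norm_lineDeriv_inner_div_norm_le u v x
  refine integral_inner_mul_mul_gaussianWeight hT m
    (span_singleton_ne_top_of_two_le_finrank hE v) (Submodule.mem_span_singleton_self v)
    (fun x hx ↦ hasLineDerivAt_inner_div_norm u v (ne_of_mem_of_not_mem (zero_mem _) hx).symm)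
    int_f ((int_f_inner.sub (int_f.const_mul ⟪T v, m⟫)).congr (.of_forall fun x ↦ ?_)) int_f'
  simp only [Pi.sub_apply, inner_sub_right]
  ring

end NormalizedInner

section MultiGaussian

open Matrix
open scoped MatrixOrder

lemma exists_pos_mul_norm_sq_le_inner_toEuclideanCLM {ι : Type*} [Fintype ι] [DecidableEq ι]
    {A : Matrix ι ι ℝ} (hA : A.PosDef) :
    ∃ l > 0, ∀ y, l * ‖y‖ ^ 2 ≤ ⟪y, toEuclideanCLM (𝕜 := ℝ) A y⟫ := by
  cases isEmpty_or_nonempty ι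
  · exact ⟨1, one_pos, fun y ↦ by simp [Subsingleton.elim y 0]⟩
  obtain ⟨l, hl, hlA⟩ := (CFC.exists_pos_algebraMap_le_iff hA.isHermitian).2
    fun _ ↦ hA.isStrictlyPositive.spectrum_pos
  refine ⟨l, hl, fun y ↦ ?_⟩
  have := (Matrix.le_iff.1 hlA).dotProduct_mulVec_nonneg y.ofLp
  rw [star_trivial, ← inner_toEuclideanCLM, map_sub] at this
  simpa [inner_sub_right, Algebra.algebraMap_eq_smul_one, inner_smul_right,
    real_inner_self_eq_norm_sq] using this

lemma gaussianWeight_toEuclideanCLM {ι : Type*} [Fintype ι] [DecidableEq ι] (A : Matrix ι ι ℝ)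
    (m x : EuclideanSpace ℝ ι) :
    gaussianWeight (toEuclideanCLM (𝕜 := ℝ) A) m x
      = exp (-(∑ i, ∑ k, (x i - m i) * A i k * (x k - m k)) / 2) := by
  rw [gaussianWeight, inner_toEuclideanCLM]
  simp [dotProduct, mulVec, Finset.mul_sum, mul_assoc]

variable {d : ℕ} {S : Matrix (Fin d) (Fin d) ℝ}

lemma integral_multiGaussian (hS : 0 ≤ S.det) (m : EuclideanSpace ℝ (Fin d))
    (g : EuclideanSpace ℝ (Fin d) → ℝ) :
    ∫ x, g x ∂multiGaussian d m S
      = (2 * π) ^ (-(d : ℝ) / 2) * S.det ^ (-(1 : ℝ) / 2) *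
        ∫ x, g x * gaussianWeight (toEuclideanCLM (𝕜 := ℝ) S⁻¹) m x := by
  simp only [multiGaussian, ← gaussianWeight_toEuclideanCLM]
  rw [integral_withDensity_eq_integral_toReal_smul (by fun_prop) (by simp), ← integral_const_mul]
  congr with x
  rw [ENNReal.toReal_ofReal (mul_nonneg (by positivity) (gaussianWeight_nonneg _ m x)), smul_eq_mul]
  ring

theorem integral_inner_mul_inner_div_norm_multiGaussian (hd : 2 ≤ d) (hS : S.PosDef)
    (m u w : EuclideanSpace ℝ (Fin d)) :
    ∫ x, ⟪w, x - m⟫ * ⟪u, x⟫ / ‖x‖ ∂multiGaussian d m S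
      = ∫ x, (⟪u, toEuclideanCLM (𝕜 := ℝ) S w⟫ / ‖x‖
          - ⟪u, x⟫ * ⟪x, toEuclideanCLM (𝕜 := ℝ) S w⟫ / ‖x‖ ^ 3) ∂multiGaussian d m S := by
  obtain ⟨l, hl, coercive⟩ := exists_pos_mul_norm_sq_le_inner_toEuclideanCLM hS.inv
  have precision_covariance :
      toEuclideanCLM (𝕜 := ℝ) S⁻¹ (toEuclideanCLM (𝕜 := ℝ) S w) = w := by
    rw [← mul_apply_eq_comp, ← map_mul,
      nonsing_inv_mul S ((isUnit_iff_isUnit_det S).1 hS.isUnit), map_one, one_apply_eq_self]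
  have stein := integral_inner_mul_inner_div_norm_mul_gaussianWeight (μ := volume)
    (by simpa using hd) (isSymmetric_toEuclideanLin_iff.2 hS.inv.isHermitian) hl coercive
    m u (toEuclideanCLM (𝕜 := ℝ) S w)
  rw [precision_covariance] at stein
  rw [integral_multiGaussian hS.det_pos.le, integral_multiGaussian hS.det_pos.le, ← stein]
  simp only [mul_div_assoc]

end MultiGaussian

/-- Stein-type identity for the function `x ↦ x_j / |x|` under a nondegenerate multivariate
Gaussian distribution with mean `m` and covariance matrix `Σ = (σ_{jk})`:
`E[(X_j - m_j) X_j / |X|] = E[σ_{jj}/|X| - (∑_k σ_{jk} X_j X_k)/|X|³]`. -/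
theorem stein_identity_gaussian (d : ℕ) (hd : 2 ≤ d)
    (m : EuclideanSpace ℝ (Fin d)) (S : Matrix (Fin d) (Fin d) ℝ)
    (hS : S.PosDef) (j : Fin d) :
    ∫ x, (x j - m j) * x j / ‖x‖ ∂(multiGaussian d m S)
      = ∫ x, (S j j / ‖x‖ - (∑ k, S j k * x j * x k) / ‖x‖ ^ 3)
          ∂(multiGaussian d m S) := by
  have hsymm (k : Fin d) : S k j = S j k := hS.isHermitian.apply j k
  have stein := integral_inner_mul_inner_div_norm_multiGaussian hd hS m
    (EuclideanSpace.single j 1) (EuclideanSpace.single j 1)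
  simpa [EuclideanSpace.inner_single_left, PiLp.inner_apply, hsymm, Finset.mul_sum, mul_comm,
    mul_assoc, mul_left_comm] using stein
end

section
/- Let d ≥ 2, let X be a random vector in ℝ^d distributed according to the multivariate Gaussian law with mean vector m and positive definite covariance matrix Σ, and let c > 0. Then E|(1 − c/|X|)·X − m|² ≤ E|X − m|² + c² − 2c·(tr Σ − λ_max(Σ))·E[1/|X|], where λ_max(Σ) is the largest eigenvalue of Σ and |x| is the Euclidean norm on ℝ^d. -/
open Real MeasureTheory

/-!
Gaussian integration by parts, pushed forward from the standard Gaussian along `Σ^{1/2}`, gives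
Stein's identity `E⟪X - m, F X⟫ = E tr (DF(X) Σ)` for smooth vector fields `F`. For the smoothed
direction `F x = x / s` with `s = √(|x|² + ε²)` the trace is `tr Σ / s - ⟪x, Σ x⟫ / s³`, which is at
least `(tr Σ - λ_max Σ) / s`. As `ε → 0`, Fatou's lemma on the left and dominated convergence on the
right yield `(tr Σ - λ_max Σ) E[1/|X|] ≤ E⟪X - m, X/|X|⟫`, and Fatou also shows that `1/|X|` is
integrable since `tr Σ > λ_max Σ`. This bounds the cross term in the expansion of
`|(X - m) - c X/|X||²`.
-/

open ProbabilityTheory Module Filter Topology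
open scoped RealInnerProductSpace ENNReal MatrixOrder

theorem map_withDensity_measurableEquiv {α β : Type*} [MeasurableSpace α] [MeasurableSpace β]
    (μ : Measure α) (f : α → ℝ≥0∞) (e : α ≃ᵐ β) :
    (μ.withDensity f).map e = (μ.map e).withDensity (f ∘ e.symm) := by
  ext s hs
  rw [e.map_apply, withDensity_apply _ (e.measurable hs), withDensity_apply _ hs,
    e.measurableEmbedding.restrict_map, lintegral_map_equiv]
  simp

theorem map_add_continuousLinearEquiv_withDensity {E : Type*} [NormedAddCommGroup E]
    [NormedSpace ℝ E] [FiniteDimensional ℝ E] [MeasurableSpace E] [BorelSpace E] (ν : Measure E)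
    [ν.IsAddHaarMeasure] (m : E) (A : E ≃L[ℝ] E) (f : E → ℝ≥0∞) :
    (ν.withDensity f).map (fun x ↦ m + A x) =
      ENNReal.ofReal |A.toContinuousLinearMap.det|⁻¹ •
        ν.withDensity (fun y ↦ f (A.symm (y - m))) := by
  let e : E ≃ᵐ E := (A.toHomeomorph.trans (Homeomorph.addLeft m)).toMeasurableEquiv
  have hdet : A.toContinuousLinearMap.det ≠ 0 := A.toLinearEquiv.isUnit_det'.ne_zero
  have hA : ν.map A = ENNReal.ofReal |A.toContinuousLinearMap.det|⁻¹ • ν := by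
    rw [← abs_inv]
    exact Measure.map_linearMap_addHaar_eq_smul_addHaar ν hdet
  have hmap : ν.map e = ENNReal.ofReal |A.toContinuousLinearMap.det|⁻¹ • ν := calc
    ν.map e = (ν.map A).map (m + ·) :=
      (Measure.map_map (measurable_const_add m) A.continuous.measurable).symm
    _ = ENNReal.ofReal |A.toContinuousLinearMap.det|⁻¹ • ν := by
      rw [hA, Measure.map_smul, map_add_left_eq_self]
  have hsymm : f ∘ e.symm = fun y ↦ f (A.symm (y - m)) := by
    ext y
    simp only [sub_eq_neg_add]
    rfl
  rw [← hsymm, ← withDensity_smul_measure, ← hmap, ← map_withDensity_measurableEquiv]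
  rfl

theorem integrable_and_integral_le_of_tendsto {α κ : Type*} [MeasurableSpace α] {ν : Measure α}
    {l : Filter κ} [l.NeBot] [l.IsCountablyGenerated] {f : κ → α → ℝ} {g : α → ℝ} {a : κ → ℝ}
    {b : ℝ} (hf : ∀ n, Integrable (f n) ν) (hf0 : ∀ n, 0 ≤ᵐ[ν] f n)
    (hlim : ∀ᵐ x ∂ν, Tendsto (f · x) l (𝓝 (g x))) (hfa : ∀ n, ∫ x, f n x ∂ν ≤ a n)
    (ha : Tendsto a l (𝓝 b)) :
    Integrable g ν ∧ ∫ x, g x ∂ν ≤ b := by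
  obtain ⟨u, hu⟩ := l.exists_seq_tendsto
  have hg : AEStronglyMeasurable g ν :=
    aestronglyMeasurable_of_tendsto_ae l (fun n ↦ (hf n).1) hlim
  have hg0 : 0 ≤ᵐ[ν] g := by
    filter_upwards [hlim, ae_all_iff.mpr fun n ↦ hf0 (u n)] with x hx hx0
    exact ge_of_tendsto' (hx.comp hu) hx0
  have hb : 0 ≤ b := ge_of_tendsto' ha fun n ↦ (integral_nonneg_of_ae (hf0 n)).trans (hfa n)
  have hle : ∫⁻ x, .ofReal (g x) ∂ν ≤ .ofReal b := calc
    ∫⁻ x, .ofReal (g x) ∂ν = ∫⁻ x, liminf (fun n ↦ .ofReal (f n x)) l ∂ν :=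
      lintegral_congr_ae (hlim.mono fun x hx ↦ (ENNReal.tendsto_ofReal hx).liminf_eq.symm)
    _ ≤ liminf (fun n ↦ ∫⁻ x, .ofReal (f n x) ∂ν) l :=
      lintegral_liminf_le' fun n ↦ (hf n).1.aemeasurable.ennreal_ofReal
    _ ≤ liminf (fun n ↦ .ofReal (a n)) l := by
      refine liminf_le_liminf (.of_forall fun n ↦ ?_)
      rw [← ofReal_integral_eq_lintegral_ofReal (hf n) (hf0 n)]
      exact ENNReal.ofReal_le_ofReal (hfa n)
    _ = .ofReal b := (ENNReal.tendsto_ofReal ha).liminf_eq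
  refine ⟨⟨hg, ?_⟩, ?_⟩
  · exact (hasFiniteIntegral_iff_ofReal hg0).mpr (hle.trans_lt ENNReal.ofReal_lt_top)
  · rw [integral_eq_lintegral_of_nonneg_ae hg0 hg]
    exact ENNReal.toReal_le_of_le_ofReal hb hle

theorem integrable_trace_comp {α E : Type*} [MeasurableSpace α] {ν : Measure α}
    [NormedAddCommGroup E] [InnerProductSpace ℝ E] [FiniteDimensional ℝ E] {B : α → E →L[ℝ] E}
    (hB : ∀ v, Integrable (fun x ↦ B x v) ν) (A : E →L[ℝ] E) :
    Integrable (fun x ↦ LinearMap.trace ℝ E ((B x).comp A).toLinearMap) ν := by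
  simp only [LinearMap.trace_eq_sum_inner _ (stdOrthonormalBasis ℝ E)]
  exact integrable_finsetSum _ fun i _ ↦ (hB _).const_inner _

section StdGaussian

variable {E : Type*} [NormedAddCommGroup E] [InnerProductSpace ℝ E]

/-- The density with respect to Lebesgue measure of Mathlib's standard Gaussian measure
`stdGaussian E` on a Euclidean space `E`. -/
noncomputable def stdGaussianPDFReal (x : E) : ℝ :=
  (2 * π) ^ (-(finrank ℝ E : ℝ) / 2) * exp (-‖x‖ ^ 2 / 2)

theorem stdGaussianPDFReal_pos (x : E) : 0 < stdGaussianPDFReal x := by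
  unfold stdGaussianPDFReal; positivity

theorem continuous_stdGaussianPDFReal : Continuous (stdGaussianPDFReal (E := E)) := by
  unfold stdGaussianPDFReal; fun_prop

theorem hasFDerivAt_stdGaussianPDFReal (x : E) :
    HasFDerivAt stdGaussianPDFReal (-stdGaussianPDFReal x • innerSL ℝ x) x := by
  have h : HasFDerivAt (fun y : E ↦ -‖y‖ ^ 2 / 2) (-innerSL ℝ x) x := by
    convert! ((hasStrictFDerivAt_norm_sq x).hasFDerivAt.neg.mul_const (2⁻¹ : ℝ)) using 1
    ext; simp
  convert! h.exp.const_mul ((2 * π) ^ (-(finrank ℝ E : ℝ) / 2)) using 1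
  ext; simp [stdGaussianPDFReal, mul_assoc]

variable [FiniteDimensional ℝ E] [MeasurableSpace E] [BorelSpace E]

theorem integral_stdGaussianPDFReal_mul_cexp (t : E) :
    ∫ x, stdGaussianPDFReal x * Complex.exp (⟪x, t⟫ * Complex.I) = Complex.exp (-‖t‖ ^ 2 / 2) := by
  have hconst : ((2 * π) ^ (-(finrank ℝ E : ℝ) / 2) : ℝ) *
      ((π : ℂ) / (1 / 2 : ℝ)) ^ ((finrank ℝ E : ℂ) / 2) = 1 := by
    rw [← Complex.ofReal_div, ← Complex.ofReal_natCast, ← Complex.ofReal_ofNat,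
      ← Complex.ofReal_div, ← Complex.ofReal_cpow (by positivity), ← Complex.ofReal_mul,
      div_div_eq_mul_div, div_one, mul_comm π, ← rpow_add (by positivity)]
    simp [neg_div]
  calc ∫ x : E, stdGaussianPDFReal x * Complex.exp (⟪x, t⟫ * Complex.I)
      = ((2 * π) ^ (-(finrank ℝ E : ℝ) / 2) : ℝ) *
          ∫ x : E, Complex.exp (-(1 / 2 : ℝ) * ‖x‖ ^ 2 + Complex.I * ⟪t, x⟫) := by
        rw [← integral_const_mul]
        congr with x
        rw [stdGaussianPDFReal, Complex.ofReal_mul, mul_assoc, Complex.ofReal_exp,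
          ← Complex.exp_add, real_inner_comm]
        congr 2
        push_cast
        ring
    _ = Complex.exp (-‖t‖ ^ 2 / 2) := by
        rw [GaussianFourier.integral_cexp_neg_mul_sq_norm_add (by simp), ← mul_assoc, hconst,
          one_mul, Complex.I_sq]
        congr 1
        push_cast
        ring

theorem integrable_stdGaussianPDFReal : Integrable (stdGaussianPDFReal (E := E)) := by
  refine .of_integral_ne_zero ?_
  have h : ∫ x : E, stdGaussianPDFReal x = 1 := by
    simpa [integral_complex_ofReal] using integral_stdGaussianPDFReal_mul_cexp (0 : E)
  exact h ▸ one_ne_zero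

theorem stdGaussian_eq_withDensity :
    stdGaussian E = volume.withDensity fun x ↦ .ofReal (stdGaussianPDFReal x) := by
  have := isFiniteMeasure_withDensity_ofReal (integrable_stdGaussianPDFReal (E := E)).2
  refine Measure.ext_of_charFun (funext fun t ↦ ?_)
  rw [charFun_stdGaussian, charFun_apply, integral_withDensity_eq_integral_toReal_smul
    (continuous_stdGaussianPDFReal.measurable.ennreal_ofReal) (by simp)]
  simp only [ENNReal.toReal_ofReal (stdGaussianPDFReal_pos _).le, Complex.real_smul,
    integral_stdGaussianPDFReal_mul_cexp]

variable {F : Type*} [NormedAddCommGroup F] [NormedSpace ℝ F]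

theorem integral_stdGaussian (f : E → F) :
    ∫ x, f x ∂stdGaussian E = ∫ x, stdGaussianPDFReal x • f x := by
  rw [stdGaussian_eq_withDensity, integral_withDensity_eq_integral_toReal_smul
    (continuous_stdGaussianPDFReal.measurable.ennreal_ofReal) (by simp)]
  simp only [ENNReal.toReal_ofReal (stdGaussianPDFReal_pos _).le]

theorem integrable_stdGaussian_iff (f : E → F) :
    Integrable f (stdGaussian E) ↔ Integrable fun x ↦ stdGaussianPDFReal x • f x := by
  rw [stdGaussian_eq_withDensity, integrable_withDensity_iff_integrable_smul'
    (continuous_stdGaussianPDFReal.measurable.ennreal_ofReal) (by simp)]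
  simp only [ENNReal.toReal_ofReal (stdGaussianPDFReal_pos _).le]

theorem integral_inner_smul_stdGaussian {g : E → F} {g' : E → E →L[ℝ] F} (v : E)
    (hg : ∀ x, HasFDerivAt g (g' x) x) (hg2 : MemLp g 2 (stdGaussian E))
    (hg' : Integrable (fun x ↦ g' x v) (stdGaussian E)) :
    ∫ x, ⟪x, v⟫ • g x ∂stdGaussian E = ∫ x, g' x v ∂stdGaussian E := by
  have hinner : MemLp (fun x : E ↦ ⟪x, v⟫) 2 (stdGaussian E) :=
    IsGaussian.memLp_two_id.inner_const v
  have hint : Integrable (fun x ↦ ⟪x, v⟫ • g x) (stdGaussian E) :=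
    memLp_one_iff_integrable.mp (hg2.smul hinner)
  have hg1 : Integrable g (stdGaussian E) := hg2.integrable one_le_two
  rw [integrable_stdGaussian_iff] at hint hg1 hg'
  have ibp := integral_bilinear_hasFDerivAt_right_eq_neg_left_of_integrable (μ := volume)
    (B := ContinuousLinearMap.lsmul ℝ ℝ) (f := stdGaussianPDFReal)
    (f' := fun x ↦ -stdGaussianPDFReal x • innerSL ℝ x) (v := v)
    (by simpa [mul_smul] using hint.neg) hg' hg1
    (fun x _ ↦ hasFDerivAt_stdGaussianPDFReal x) (fun x _ ↦ hg x)
  simpa [integral_stdGaussian, mul_smul, integral_neg] using ibp.symm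

end StdGaussian

section Matrices

open Matrix

variable {ι : Type*} [Fintype ι] [DecidableEq ι] {S : Matrix ι ι ℝ}

theorem inner_toEuclideanCLM_eq_sum (A : Matrix ι ι ℝ) (x y : EuclideanSpace ℝ ι) :
    ⟪x, toEuclideanCLM (𝕜 := ℝ) A y⟫ = ∑ i, ∑ k, x i * A i k * y k := by
  simp [inner_toEuclideanCLM, dotProduct, mulVec, Finset.mul_sum, mul_assoc]

theorem cfcSqrt_mul_inv_mul_cfcSqrt (hS : S.PosDef) : CFC.sqrt S * S⁻¹ * CFC.sqrt S = 1 := by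
  have hdet : IsUnit (CFC.sqrt S).det := (isUnit_iff_isUnit_det _).mp
    ((CFC.isUnit_sqrt_iff S hS.posSemidef.nonneg).mpr hS.isUnit)
  calc CFC.sqrt S * S⁻¹ * CFC.sqrt S
      = CFC.sqrt S * (CFC.sqrt S * CFC.sqrt S)⁻¹ * CFC.sqrt S := by
        rw [CFC.sqrt_mul_sqrt_self S hS.posSemidef.nonneg]
    _ = 1 := by
        rw [Matrix.mul_inv_rev, mul_nonsing_inv_cancel_left _ _ hdet, nonsing_inv_mul _ hdet]

theorem det_cfcSqrt (hS : S.PosSemidef) : (CFC.sqrt S).det = √S.det := by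
  rw [eq_comm, sqrt_eq_iff_mul_self_eq hS.det_nonneg (CFC.sqrt_nonneg S).posSemidef.det_nonneg,
    ← det_mul, CFC.sqrt_mul_sqrt_self S hS.nonneg]

theorem toEuclideanCLM_cfcSqrt_toEuclideanCLM_cfcSqrt (hS : S.PosSemidef)
    (v : EuclideanSpace ℝ ι) :
    toEuclideanCLM (𝕜 := ℝ) (CFC.sqrt S) (toEuclideanCLM (𝕜 := ℝ) (CFC.sqrt S) v) =
      toEuclideanCLM (𝕜 := ℝ) S v := by
  rw [← mul_apply_eq_comp, ← map_mul, CFC.sqrt_mul_sqrt_self S hS.nonneg]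

theorem inner_toEuclideanCLM_cfcSqrt_left (x y : EuclideanSpace ℝ ι) :
    ⟪toEuclideanCLM (𝕜 := ℝ) (CFC.sqrt S) x, y⟫ =
      ⟪x, toEuclideanCLM (𝕜 := ℝ) (CFC.sqrt S) y⟫ :=
  ((CFC.sqrt_nonneg S).isSelfAdjoint.map (toEuclideanCLM (𝕜 := ℝ))).isSymmetric x y

theorem trace_toEuclideanCLM (A : Matrix ι ι ℝ) :
    LinearMap.trace ℝ _ (toEuclideanCLM (𝕜 := ℝ) A).toLinearMap = A.trace := by
  rw [coe_toEuclideanCLM_eq_toEuclideanLin, toEuclideanLin, toLpLin_eq_toLin, trace_toLin_eq]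

theorem inner_toEuclideanCLM_self_le (hS : S.IsHermitian) (x : EuclideanSpace ℝ ι) :
    ⟪x, toEuclideanCLM (𝕜 := ℝ) S x⟫ ≤ (⨆ i, hS.eigenvalues i) * ‖x‖ ^ 2 := by
  let b := hS.eigenvectorBasis
  have heig (i) : toEuclideanCLM (𝕜 := ℝ) S (b i) = hS.eigenvalues i • b i :=
    WithLp.ofLp_injective 2 (by simpa using hS.mulVec_eigenvectorBasis i)
  have hsymm : (toEuclideanCLM (𝕜 := ℝ) S : _ →ₗ[ℝ] EuclideanSpace ℝ ι).IsSymmetric :=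
    (hS.isSelfAdjoint.map (toEuclideanCLM (𝕜 := ℝ))).isSymmetric
  calc ⟪x, toEuclideanCLM (𝕜 := ℝ) S x⟫
      = ∑ i, hS.eigenvalues i * ⟪b i, x⟫ ^ 2 := by
        rw [← b.sum_inner_mul_inner]
        refine Finset.sum_congr rfl fun i _ ↦ ?_
        rw [← ContinuousLinearMap.coe_coe, ← hsymm, ContinuousLinearMap.coe_coe, heig,
          real_inner_smul_left, real_inner_comm (b i)]
        ring
    _ ≤ ∑ i, (⨆ i, hS.eigenvalues i) * ⟪b i, x⟫ ^ 2 := by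
        gcongr with i
        exact le_ciSup (Set.finite_range _).bddAbove i
    _ = (⨆ i, hS.eigenvalues i) * ‖x‖ ^ 2 := by
        rw [← Finset.mul_sum, b.sum_sq_inner_right]

theorem iSup_eigenvalues_lt_trace (hS : S.PosSemidef) (hr : 2 ≤ S.rank) :
    ⨆ i, hS.1.eigenvalues i < S.trace := by
  rw [hS.1.rank_eq_card_non_zero_eigs] at hr
  obtain ⟨⟨j, hj⟩, ⟨k, hk⟩, hjk⟩ := Fintype.one_lt_card_iff.mp hr
  have : Nonempty ι := ⟨j⟩
  obtain ⟨i, hi⟩ := exists_eq_ciSup_of_finite (f := hS.1.eigenvalues)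
  obtain ⟨l, hli, hl⟩ : ∃ l ≠ i, hS.1.eigenvalues l ≠ 0 := by
    by_cases hji : j = i
    · exact ⟨k, fun hki ↦ hjk (by simp [hji, hki]), hk⟩
    · exact ⟨j, hji, hj⟩
  rw [← hi, hS.1.trace_eq_sum_eigenvalues]
  exact Finset.single_lt_sum hli (Finset.mem_univ i) (Finset.mem_univ l)
    ((hS.eigenvalues_nonneg l).lt_of_ne' hl) fun _ _ _ ↦ hS.eigenvalues_nonneg _

end Matrices

section MultivariateGaussian

open Matrix

variable {ι : Type*} [Fintype ι] [DecidableEq ι] (μ : EuclideanSpace ℝ ι) {S : Matrix ι ι ℝ}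

theorem integral_inner_smul_multivariateGaussian {F : Type*} [NormedAddCommGroup F]
    [NormedSpace ℝ F] (hS : S.PosSemidef) {g : EuclideanSpace ℝ ι → F}
    {g' : EuclideanSpace ℝ ι → EuclideanSpace ℝ ι →L[ℝ] F} (u : EuclideanSpace ℝ ι)
    (hg : ∀ x, HasFDerivAt g (g' x) x) (hg2 : MemLp g 2 (multivariateGaussian μ S))
    (hg' : Integrable (fun x ↦ g' x (toEuclideanCLM (𝕜 := ℝ) S u)) (multivariateGaussian μ S)) :
    ∫ x, ⟪x - μ, u⟫ • g x ∂multivariateGaussian μ S =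
      ∫ x, g' x (toEuclideanCLM (𝕜 := ℝ) S u) ∂multivariateGaussian μ S := by
  set A := toEuclideanCLM (𝕜 := ℝ) (CFC.sqrt S)
  have hT : AEMeasurable (fun z ↦ μ + A z) (stdGaussian (EuclideanSpace ℝ ι)) := by fun_prop
  have hmeas : AEStronglyMeasurable (fun x ↦ ⟪x - μ, u⟫ • g x) (multivariateGaussian μ S) :=
    (by fun_prop : Continuous fun x ↦ ⟪x - μ, u⟫).aestronglyMeasurable.smul hg2.1
  have hcomp (z) : HasFDerivAt (fun z ↦ g (μ + A z)) ((g' (μ + A z)).comp A) z :=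
    (hg _).comp z (A.hasFDerivAt.const_add μ)
  have hSu : A (A u) = toEuclideanCLM (𝕜 := ℝ) S u :=
    toEuclideanCLM_cfcSqrt_toEuclideanCLM_cfcSqrt hS u
  rw [multivariateGaussian, integral_map hT hmeas, integral_map hT hg'.1]
  have stein := integral_inner_smul_stdGaussian (A u) hcomp (hg2.comp_of_map hT)
    (by simpa [hSu, Function.comp_def] using hg'.comp_aemeasurable hT)
  simpa [hSu, A, inner_toEuclideanCLM_cfcSqrt_left] using stein

theorem integral_inner_multivariateGaussian_eq_integral_trace (hS : S.PosSemidef)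
    {F : EuclideanSpace ℝ ι → EuclideanSpace ℝ ι}
    {F' : EuclideanSpace ℝ ι → EuclideanSpace ℝ ι →L[ℝ] EuclideanSpace ℝ ι}
    (hF : ∀ x, HasFDerivAt F (F' x) x) (hF2 : MemLp F 2 (multivariateGaussian μ S))
    (hF' : ∀ v, Integrable (fun x ↦ F' x v) (multivariateGaussian μ S)) :
    ∫ x, ⟪x - μ, F x⟫ ∂multivariateGaussian μ S =
      ∫ x, LinearMap.trace ℝ _ ((F' x).comp (toEuclideanCLM (𝕜 := ℝ) S)).toLinearMap
        ∂multivariateGaussian μ S := by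
  let b := EuclideanSpace.basisFun ι ℝ
  have hcoord (i x) : HasFDerivAt (fun x ↦ ⟪b i, F x⟫) ((innerSL ℝ (b i)).comp (F' x)) x :=
    (innerSL ℝ (b i)).hasFDerivAt.comp x (hF x)
  have hF1 (i) : Integrable (fun x ↦ ⟪x - μ, b i⟫ * ⟪b i, F x⟫) (multivariateGaussian μ S) :=
    ((IsGaussian.memLp_two_id.sub (memLp_const μ)).inner_const (b i)).integrable_mul
      (hF2.const_inner (b i))
  calc ∫ x, ⟪x - μ, F x⟫ ∂multivariateGaussian μ S
      = ∑ i, ∫ x, ⟪x - μ, b i⟫ * ⟪b i, F x⟫ ∂multivariateGaussian μ S := by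
        rw [← integral_finsetSum _ fun i _ ↦ hF1 i]
        simp only [b.sum_inner_mul_inner]
    _ = ∑ i, ∫ x, ⟪b i, F' x (toEuclideanCLM (𝕜 := ℝ) S (b i))⟫ ∂multivariateGaussian μ S :=
        Finset.sum_congr rfl fun i _ ↦ integral_inner_smul_multivariateGaussian μ hS (b i)
          (hcoord i) (hF2.const_inner (b i)) ((hF' _).const_inner (b i))
    _ = ∫ x, LinearMap.trace ℝ _ ((F' x).comp (toEuclideanCLM (𝕜 := ℝ) S)).toLinearMap
          ∂multivariateGaussian μ S := by
        rw [← integral_finsetSum _ fun i _ ↦ (hF' _).const_inner (b i)]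
        simp only [LinearMap.trace_eq_sum_inner _ b, ContinuousLinearMap.coe_coe,
          ContinuousLinearMap.comp_apply]

theorem nullSingletonClass_multivariateGaussian (hS : S.PosSemidef) (hS0 : S ≠ 0) :
    NullSingletonClass (multivariateGaussian μ S) := by
  refine IsGaussian.nullSingletonClass fun x hx ↦ hS0 ?_
  ext i j
  rw [← covariance_eval_multivariateGaussian hS (μ := μ) i j, hx]
  simp [covariance]

theorem multiGaussian_eq_multivariateGaussian {d : ℕ} (m : EuclideanSpace ℝ (Fin d))
    {S : Matrix (Fin d) (Fin d) ℝ} (hS : S.PosDef) :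
    multiGaussian d m S = multivariateGaussian m S := by
  have hunit : IsUnit (CFC.sqrt S) := (CFC.isUnit_sqrt_iff S hS.posSemidef.nonneg).mpr hS.isUnit
  let A : EuclideanSpace ℝ (Fin d) ≃L[ℝ] EuclideanSpace ℝ (Fin d) :=
    .ofUnit (hunit.unit.map (toEuclideanCLM (n := Fin d) (𝕜 := ℝ)))
  have hnorm (x : EuclideanSpace ℝ (Fin d)) :
      ‖A.symm x‖ ^ 2 = ∑ i, ∑ k, x i * S⁻¹ i k * x k := by
    obtain ⟨y, rfl⟩ := A.surjective x
    have hy : A y = toEuclideanCLM (𝕜 := ℝ) (CFC.sqrt S) y := rfl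
    rw [A.symm_apply_apply, ← inner_toEuclideanCLM_eq_sum, hy, inner_toEuclideanCLM_cfcSqrt_left,
      ← mul_apply_eq_comp, ← map_mul, ← mul_apply_eq_comp, ← map_mul,
      cfcSqrt_mul_inv_mul_cfcSqrt hS, map_one, one_apply_eq_self, real_inner_self_eq_norm_sq]
  have hdet : |A.toContinuousLinearMap.det|⁻¹ = S.det ^ (-(1 : ℝ) / 2) := by
    have : A.toContinuousLinearMap.det = √S.det := by
      rw [← det_cfcSqrt hS.posSemidef]
      exact LinearMap.det_toLpLin _ _
    rw [this, abs_of_nonneg (sqrt_nonneg _), sqrt_eq_rpow, ← rpow_neg hS.det_pos.le, neg_div]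
  have hmap : multivariateGaussian m S =
      (stdGaussian (EuclideanSpace ℝ (Fin d))).map (fun x ↦ m + A x) := rfl
  have hc : 0 ≤ S.det ^ (-(1 : ℝ) / 2) := rpow_nonneg hS.det_pos.le _
  rw [hmap, stdGaussian_eq_withDensity, map_add_continuousLinearEquiv_withDensity, hdet,
    ← withDensity_smul' _ _ ENNReal.ofReal_ne_top]
  refine congrArg volume.withDensity (funext fun x ↦ ?_)
  rw [Pi.smul_apply, smul_eq_mul, ← ENNReal.ofReal_mul hc, stdGaussianPDFReal, hnorm,
    finrank_euclideanSpace_fin]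
  simp only [PiLp.sub_apply]
  ring_nf

end MultivariateGaussian

section SmoothNorm

variable {E : Type*} [NormedAddCommGroup E]

/-- The smooth regularisation `√(‖x‖² + ε²)` of the norm. -/
noncomputable def smoothNorm (ε : ℝ) (x : E) : ℝ := √(‖x‖ ^ 2 + ε ^ 2)

theorem smoothNorm_zero_left (x : E) : smoothNorm 0 x = ‖x‖ := by simp [smoothNorm]

theorem norm_le_smoothNorm (ε : ℝ) (x : E) : ‖x‖ ≤ smoothNorm ε x :=
  le_sqrt_of_sq_le (le_add_of_nonneg_right (sq_nonneg ε))

theorem le_smoothNorm (ε : ℝ) (x : E) : ε ≤ smoothNorm ε x :=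
  le_sqrt_of_sq_le (le_add_of_nonneg_left (sq_nonneg ‖x‖))

theorem smoothNorm_pos {ε : ℝ} (hε : 0 < ε) (x : E) : 0 < smoothNorm ε x :=
  hε.trans_le (le_smoothNorm ε x)

theorem smoothNorm_nonneg (ε : ℝ) (x : E) : 0 ≤ smoothNorm ε x := sqrt_nonneg _

theorem continuous_smoothNorm (ε : ℝ) : Continuous (smoothNorm ε : E → ℝ) := by
  unfold smoothNorm; fun_prop

theorem tendsto_inv_smoothNorm {x : E} (hx : x ≠ 0) :
    Tendsto (fun ε ↦ (smoothNorm ε x)⁻¹) (𝓝 0) (𝓝 ‖x‖⁻¹) := by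
  have hcont : Continuous fun ε ↦ smoothNorm ε x := by unfold smoothNorm; fun_prop
  have := (hcont.tendsto 0).inv₀ (by simpa [smoothNorm_zero_left] using hx)
  simpa only [smoothNorm_zero_left] using this

theorem continuous_inv_smoothNorm {ε : ℝ} (hε : 0 < ε) :
    Continuous fun x : E ↦ (smoothNorm ε x)⁻¹ :=
  (continuous_smoothNorm ε).inv₀ fun x ↦ (smoothNorm_pos hε x).ne'

theorem integrable_inv_smoothNorm [MeasurableSpace E] [BorelSpace E] {ν : Measure E}
    [IsFiniteMeasure ν] {ε : ℝ} (hε : 0 < ε) : Integrable (fun x ↦ (smoothNorm ε x)⁻¹) ν := by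
  refine .of_bound (continuous_inv_smoothNorm hε).measurable.aestronglyMeasurable ε⁻¹
    (.of_forall fun x ↦ ?_)
  rw [norm_inv, norm_of_nonneg (smoothNorm_nonneg ε x)]
  exact inv_anti₀ hε (le_smoothNorm ε x)

variable [InnerProductSpace ℝ E]

/-- The smooth regularisation `x / √(‖x‖² + ε²)` of the direction `x / ‖x‖`. -/
noncomputable def smoothDirection (ε : ℝ) (x : E) : E := (smoothNorm ε x)⁻¹ • x

/-- The derivative of `smoothDirection ε` at `x`. -/
noncomputable def smoothDirectionFDeriv (ε : ℝ) (x : E) : E →L[ℝ] E :=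
  (smoothNorm ε x)⁻¹ • .id ℝ E - (smoothNorm ε x ^ 3)⁻¹ • (innerSL ℝ x).smulRight x

theorem norm_smoothDirection_le_one (ε : ℝ) (x : E) : ‖smoothDirection ε x‖ ≤ 1 := by
  rw [smoothDirection, norm_smul, norm_inv, norm_of_nonneg (smoothNorm_nonneg ε x)]
  exact inv_mul_le_one_of_le₀ (norm_le_smoothNorm ε x) (smoothNorm_nonneg ε x)

theorem tendsto_smoothDirection (x : E) :
    Tendsto (fun ε ↦ smoothDirection ε x) (𝓝 0) (𝓝 (‖x‖⁻¹ • x)) := by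
  rcases eq_or_ne x 0 with rfl | hx
  · simp [smoothDirection]
  · exact (tendsto_inv_smoothNorm hx).smul_const x

theorem hasFDerivAt_smoothNorm {ε : ℝ} (hε : 0 < ε) (x : E) :
    HasFDerivAt (smoothNorm ε) ((smoothNorm ε x)⁻¹ • innerSL ℝ x) x := by
  have hsq : ‖x‖ ^ 2 + ε ^ 2 ≠ 0 := by positivity
  convert! ((hasStrictFDerivAt_norm_sq x).hasFDerivAt.add_const (ε ^ 2)).sqrt hsq using 1
  rw [smoothNorm, smul_comm, ← Nat.cast_smul_eq_nsmul ℝ, smul_smul]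
  congr 1
  push_cast
  field_simp

theorem hasFDerivAt_smoothDirection {ε : ℝ} (hε : 0 < ε) (x : E) :
    HasFDerivAt (smoothDirection ε) (smoothDirectionFDeriv ε x) x := by
  have hs : smoothNorm ε x ≠ 0 := (smoothNorm_pos hε x).ne'
  convert! ((hasDerivAt_inv hs).comp_hasFDerivAt x
    (hasFDerivAt_smoothNorm hε x)).smul (hasFDerivAt_id x) using 1
  have hcube : (smoothNorm ε x ^ 3)⁻¹ = (smoothNorm ε x ^ 2)⁻¹ * (smoothNorm ε x)⁻¹ := by
    rw [← mul_inv, ← pow_succ]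
  ext v
  simp [smoothDirectionFDeriv, hcube, smul_smul, sub_eq_add_neg, mul_assoc]

theorem norm_smoothDirectionFDeriv_le {ε : ℝ} (hε : 0 < ε) (x : E) :
    ‖smoothDirectionFDeriv ε x‖ ≤ 2 * ε⁻¹ := by
  have hs := smoothNorm_pos hε x
  calc ‖smoothDirectionFDeriv ε x‖
      ≤ (smoothNorm ε x)⁻¹ * 1 + (smoothNorm ε x ^ 3)⁻¹ * (‖x‖ * ‖x‖) := by
        refine (norm_sub_le _ _).trans (add_le_add ?_ (le_of_eq ?_))
        · rw [norm_smul, norm_of_nonneg (inv_nonneg.mpr hs.le)]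
          gcongr
          exact ContinuousLinearMap.norm_id_le
        · rw [norm_smul, norm_of_nonneg (inv_nonneg.mpr (pow_nonneg hs.le 3)),
            ContinuousLinearMap.norm_smulRight_apply, innerSL_apply_norm]
    _ ≤ (smoothNorm ε x)⁻¹ * 1 +
          (smoothNorm ε x ^ 3)⁻¹ * (smoothNorm ε x * smoothNorm ε x) := by
        gcongr <;> exact norm_le_smoothNorm ε x
    _ = 2 * (smoothNorm ε x)⁻¹ := by field_simp; norm_num
    _ ≤ 2 * ε⁻¹ := by
        gcongr
        exact le_smoothNorm ε x

theorem continuous_smoothDirectionFDeriv {ε : ℝ} (hε : 0 < ε) :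
    Continuous (smoothDirectionFDeriv ε : E → E →L[ℝ] E) := by
  have hcube : Continuous fun x : E ↦ (smoothNorm ε x ^ 3)⁻¹ :=
    ((continuous_smoothNorm ε).pow 3).inv₀ fun x ↦ (pow_pos (smoothNorm_pos hε x) 3).ne'
  have := continuous_inv_smoothNorm (E := E) hε
  unfold smoothDirectionFDeriv
  fun_prop

theorem integrable_smoothDirectionFDeriv_apply [MeasurableSpace E] [BorelSpace E]
    [SecondCountableTopology E] {ν : Measure E} [IsFiniteMeasure ν] {ε : ℝ} (hε : 0 < ε) (v : E) :
    Integrable (fun x ↦ smoothDirectionFDeriv ε x v) ν := by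
  refine .of_bound ((continuous_smoothDirectionFDeriv hε).clm_apply
    continuous_const).aestronglyMeasurable (2 * ε⁻¹ * ‖v‖) (.of_forall fun x ↦ ?_)
  exact (smoothDirectionFDeriv ε x).le_of_opNorm_le (norm_smoothDirectionFDeriv_le hε x) v

theorem trace_smoothDirectionFDeriv_comp [FiniteDimensional ℝ E] (ε : ℝ) (x : E) (A : E →L[ℝ] E) :
    LinearMap.trace ℝ E ((smoothDirectionFDeriv ε x).comp A).toLinearMap =
      (smoothNorm ε x)⁻¹ * LinearMap.trace ℝ E A.toLinearMap -
        (smoothNorm ε x ^ 3)⁻¹ * ⟪x, A x⟫ := by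
  have hcomp : ((smoothDirectionFDeriv ε x).comp A).toLinearMap =
      (smoothNorm ε x)⁻¹ • A.toLinearMap - (smoothNorm ε x ^ 3)⁻¹ •
        ((innerSL ℝ x).comp A).toLinearMap.smulRight x := by
    ext v
    simp [smoothDirectionFDeriv]
  rw [hcomp, map_sub, map_smul, map_smul, LinearMap.trace_smulRight]
  simp

theorem aestronglyMeasurable_smoothDirection [MeasurableSpace E] [BorelSpace E] {ν : Measure E}
    (hid : AEStronglyMeasurable id ν) (ε : ℝ) : AEStronglyMeasurable (smoothDirection ε) ν :=
  (continuous_smoothNorm ε).measurable.inv.aestronglyMeasurable.smul hid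

theorem tendsto_integral_inner_smoothDirection [MeasurableSpace E] [BorelSpace E] {ν : Measure E}
    [IsFiniteMeasure ν] (hid : Integrable id ν) (m : E) :
    Tendsto (fun ε ↦ ∫ x, ⟪x - m, smoothDirection ε x⟫ ∂ν) (𝓝 0)
      (𝓝 (∫ x, ⟪x - m, ‖x‖⁻¹ • x⟫ ∂ν)) := by
  have hsub : Integrable (fun x ↦ x - m) ν := hid.sub (integrable_const m)
  refine tendsto_integral_filter_of_dominated_convergence (fun x ↦ ‖x - m‖)
    (.of_forall fun ε ↦ hsub.1.inner (aestronglyMeasurable_smoothDirection hid.1 ε))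
    (.of_forall fun ε ↦ .of_forall fun x ↦ ?_) hsub.norm
    (.of_forall fun x ↦ tendsto_const_nhds.inner (tendsto_smoothDirection x))
  exact (norm_inner_le_norm _ _).trans
    (mul_le_of_le_one_right (norm_nonneg _) (norm_smoothDirection_le_one ε x))

end SmoothNorm

section SteinBound

open Matrix

variable {ι : Type*} [Fintype ι] [DecidableEq ι] (μ : EuclideanSpace ℝ ι) {S : Matrix ι ι ℝ}

theorem trace_sub_iSup_mul_inv_smoothNorm_le (hS : S.PosSemidef) {ε : ℝ} (hε : 0 < ε)
    (x : EuclideanSpace ℝ ι) :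
    (S.trace - ⨆ i, hS.1.eigenvalues i) * (smoothNorm ε x)⁻¹ ≤
      LinearMap.trace ℝ _
        ((smoothDirectionFDeriv ε x).comp (toEuclideanCLM (𝕜 := ℝ) S)).toLinearMap := by
  have hs := smoothNorm_pos hε x
  have hquad : ⟪x, toEuclideanCLM (𝕜 := ℝ) S x⟫ ≤
      (⨆ i, hS.1.eigenvalues i) * smoothNorm ε x ^ 2 := by
    refine (inner_toEuclideanCLM_self_le hS.1 x).trans ?_
    gcongr
    · exact Real.iSup_nonneg hS.eigenvalues_nonneg
    · exact norm_le_smoothNorm ε x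
  rw [trace_smoothDirectionFDeriv_comp, trace_toEuclideanCLM]
  calc (S.trace - ⨆ i, hS.1.eigenvalues i) * (smoothNorm ε x)⁻¹
      = (smoothNorm ε x)⁻¹ * S.trace -
          (smoothNorm ε x ^ 3)⁻¹ * ((⨆ i, hS.1.eigenvalues i) * smoothNorm ε x ^ 2) := by
        field_simp
    _ ≤ (smoothNorm ε x)⁻¹ * S.trace -
          (smoothNorm ε x ^ 3)⁻¹ * ⟪x, toEuclideanCLM (𝕜 := ℝ) S x⟫ := by
        gcongr

theorem mul_integral_inv_smoothNorm_le (hS : S.PosSemidef) {ε : ℝ} (hε : 0 < ε) :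
    (S.trace - ⨆ i, hS.1.eigenvalues i) * ∫ x, (smoothNorm ε x)⁻¹ ∂multivariateGaussian μ S ≤
      ∫ x, ⟪x - μ, smoothDirection ε x⟫ ∂multivariateGaussian μ S := by
  have hfield : MemLp (smoothDirection ε) 2 (multivariateGaussian μ S) :=
    .of_bound (aestronglyMeasurable_smoothDirection aestronglyMeasurable_id ε) 1
      (.of_forall (norm_smoothDirection_le_one ε))
  have hderiv (v) : Integrable (fun x ↦ smoothDirectionFDeriv ε x v) (multivariateGaussian μ S) :=
    integrable_smoothDirectionFDeriv_apply hε v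
  rw [integral_inner_multivariateGaussian_eq_integral_trace μ hS (hasFDerivAt_smoothDirection hε)
    hfield hderiv, ← integral_const_mul]
  exact integral_mono ((integrable_inv_smoothNorm hε).const_mul _)
    (integrable_trace_comp hderiv _) (trace_sub_iSup_mul_inv_smoothNorm_le hS hε)

theorem integrable_inv_norm_and_mul_integral_le (hS : S.PosSemidef) (hr : 2 ≤ S.rank) :
    Integrable (fun x ↦ ‖x‖⁻¹) (multivariateGaussian μ S) ∧
      (S.trace - ⨆ i, hS.1.eigenvalues i) * ∫ x, ‖x‖⁻¹ ∂multivariateGaussian μ S ≤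
        ∫ x, ⟪x - μ, ‖x‖⁻¹ • x⟫ ∂multivariateGaussian μ S := by
  have hκ : 0 < S.trace - ⨆ i, hS.1.eigenvalues i := sub_pos.mpr (iSup_eigenvalues_lt_trace hS hr)
  have hS0 : S ≠ 0 := by
    rintro rfl
    simp at hr
  have := nullSingletonClass_multivariateGaussian μ hS hS0
  let ε (n : ℕ) : ℝ := 1 / (n + 1)
  have hε0 (n) : 0 < ε n := Nat.one_div_pos_of_nat
  have hε : Tendsto ε atTop (𝓝 0) := tendsto_one_div_add_atTop_nhds_zero_nat
  have hlim : ∀ᵐ x ∂multivariateGaussian μ S,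
      Tendsto (fun n ↦ (smoothNorm (ε n) x)⁻¹) atTop (𝓝 ‖x‖⁻¹) := by
    filter_upwards [Measure.ae_ne (multivariateGaussian μ S) 0] with x hx
    exact (tendsto_inv_smoothNorm hx).comp hε
  have hright := (tendsto_integral_inner_smoothDirection
    (IsGaussian.integrable_id (μ := multivariateGaussian μ S)) μ).comp hε
  rw [← le_inv_mul_iff₀ hκ]
  exact integrable_and_integral_le_of_tendsto (fun n ↦ integrable_inv_smoothNorm (hε0 n))
    (fun n ↦ .of_forall fun x ↦ inv_nonneg.mpr (smoothNorm_nonneg _ x)) hlim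
    (fun n ↦ (le_inv_mul_iff₀ hκ).mpr (mul_integral_inv_smoothNorm_le μ hS (hε0 n)))
    (hright.const_mul _)

end SteinBound

section Risk

variable {E : Type*} [NormedAddCommGroup E] [InnerProductSpace ℝ E]

theorem norm_inv_norm_smul_le_one (x : E) : ‖‖x‖⁻¹ • x‖ ≤ 1 := by
  rw [norm_smul, norm_inv, norm_norm]
  exact inv_mul_le_one

theorem norm_shrinkage_sub_sq_le (c : ℝ) (m x : E) :
    ‖(1 - c / ‖x‖) • x - m‖ ^ 2 ≤ ‖x - m‖ ^ 2 + c ^ 2 - 2 * c * ⟪x - m, ‖x‖⁻¹ • x⟫ := by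
  calc ‖(1 - c / ‖x‖) • x - m‖ ^ 2
      = ‖(x - m) - c • ‖x‖⁻¹ • x‖ ^ 2 := by congr 2; module
    _ = ‖x - m‖ ^ 2 + c ^ 2 * ‖‖x‖⁻¹ • x‖ ^ 2 - 2 * c * ⟪x - m, ‖x‖⁻¹ • x⟫ := by
        rw [norm_sub_sq_real, real_inner_smul_right _ _ c, norm_smul c, mul_pow, norm_eq_abs,
          sq_abs]
        ring
    _ ≤ ‖x - m‖ ^ 2 + c ^ 2 - 2 * c * ⟪x - m, ‖x‖⁻¹ • x⟫ := by
        gcongr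
        exact mul_le_of_le_one_right (sq_nonneg c) (pow_le_one₀ (norm_nonneg _)
          (norm_inv_norm_smul_le_one x))

theorem integral_norm_shrinkage_sub_sq_le [MeasurableSpace E] [BorelSpace E] {ν : Measure E}
    [IsProbabilityMeasure ν] (hid : MemLp id 2 ν) (c : ℝ) (m : E) :
    ∫ x, ‖(1 - c / ‖x‖) • x - m‖ ^ 2 ∂ν ≤
      ∫ x, ‖x - m‖ ^ 2 ∂ν + c ^ 2 - 2 * c * ∫ x, ⟪x - m, ‖x‖⁻¹ • x⟫ ∂ν := by
  have hsub : MemLp (fun x ↦ x - m) 2 ν := hid.sub (memLp_const m)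
  have hadd : Integrable (fun x ↦ ‖x - m‖ ^ 2 + c ^ 2) ν :=
    hsub.norm.integrable_sq.add (integrable_const _)
  have hinner : Integrable (fun x ↦ 2 * c * ⟪x - m, ‖x‖⁻¹ • x⟫) ν := by
    refine .const_mul ((hsub.integrable one_le_two).mono (hsub.1.inner
      (measurable_norm.inv.aestronglyMeasurable.smul hid.1)) (.of_forall fun x ↦ ?_)) _
    exact (norm_inner_le_norm _ _).trans
      (mul_le_of_le_one_right (norm_nonneg _) (norm_inv_norm_smul_le_one x))
  calc ∫ x, ‖(1 - c / ‖x‖) • x - m‖ ^ 2 ∂ν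
      ≤ ∫ x, (‖x - m‖ ^ 2 + c ^ 2 - 2 * c * ⟪x - m, ‖x‖⁻¹ • x⟫) ∂ν :=
        integral_mono_of_nonneg (.of_forall fun x ↦ sq_nonneg _) (hadd.sub hinner)
          (.of_forall (norm_shrinkage_sub_sq_le c m))
    _ = ∫ x, ‖x - m‖ ^ 2 ∂ν + c ^ 2 - 2 * c * ∫ x, ⟪x - m, ‖x‖⁻¹ • x⟫ ∂ν := by
        rw [integral_sub hadd hinner, integral_add hsub.norm.integrable_sq (integrable_const _),
          integral_const_mul, integral_const, probReal_univ, one_smul]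

end Risk

theorem shrinkage_risk_bound_general {ι : Type*} [Fintype ι] [DecidableEq ι]
    (m : EuclideanSpace ℝ ι) {S : Matrix ι ι ℝ} (hS : S.PosSemidef) (hr : 2 ≤ S.rank) {c : ℝ}
    (hc : 0 ≤ c) :
    Integrable (fun x ↦ 1 / ‖x‖) (multivariateGaussian m S) ∧
      ∫ x, ‖(1 - c / ‖x‖) • x - m‖ ^ 2 ∂multivariateGaussian m S ≤
        ∫ x, ‖x - m‖ ^ 2 ∂multivariateGaussian m S + c ^ 2 -
          2 * c * (S.trace - ⨆ i, hS.1.eigenvalues i) *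
            ∫ x, 1 / ‖x‖ ∂multivariateGaussian m S := by
  simp only [one_div]
  obtain ⟨hint, hstein⟩ := integrable_inv_norm_and_mul_integral_le m hS hr
  refine ⟨hint, (integral_norm_shrinkage_sub_sq_le IsGaussian.memLp_two_id c m).trans ?_⟩
  rw [mul_assoc (2 * c)]
  gcongr

/-- Risk comparison for the shrinkage estimator `(1 - c/|X|) X` of the mean `m` of a
nondegenerate Gaussian vector `X` in `ℝ^d`:
`E|(1 - c/|X|)X - m|² ≤ E|X - m|² + c² - 2c (tr Σ - λ_max(Σ)) E[1/|X|]`. -/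
theorem shrinkage_risk_bound (d : ℕ) (hd : 2 ≤ d)
    (m : EuclideanSpace ℝ (Fin d)) (S : Matrix (Fin d) (Fin d) ℝ)
    (hS : S.PosDef) (c : ℝ) (hc : 0 < c) :
    ∫ x, ‖(1 - c / ‖x‖) • x - m‖ ^ 2 ∂(multiGaussian d m S)
      ≤ (∫ x, ‖x - m‖ ^ 2 ∂(multiGaussian d m S)) + c ^ 2
        - 2 * c * (S.trace - ⨆ i, hS.1.eigenvalues i)
            * ∫ x, 1 / ‖x‖ ∂(multiGaussian d m S) := by
  have hr : 2 ≤ S.rank := by rwa [Matrix.rank_of_isUnit S hS.isUnit, Fintype.card_fin]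
  rw [multiGaussian_eq_multivariateGaussian m hS]
  exact (shrinkage_risk_bound_general m hS.posSemidef hr hc.le).2
end
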